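/- Let p, q > 1 be coprime integers with q > p, let q/p = [a_0, a_1, …, a_n] be its regular continued fraction expansion with a_n ≥ 2, and let δ = (p−1)(q−1)/2. Then the maximal integer w ≥ 1 such that the w consecutive integers δ, δ+1, …, δ+w−1 either all belong to S(p,q) or all fail to belong to S(p,q) equals ⌊(a_n − 1)/2⌋ + 1. -/

import Mathlib

/-!
Write `m = 2ρ + 1`.  Since `2δ = (p-1)(q-1)`, the integer `δ + ρ` lies in `S(p,q)` exactly when
`A p + B q = p q + m` for some odd positive `A, B` (put `A = 2t+1`, `B = 2u+1`).  Let `q'/p'` be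
the penultimate convergent of `q/p`.  Up to exchanging the roles of `p` and `q`, we have
`q p' - p q' = 1`, so the integer solutions are `A = k q - m q'`, `B = (1-k) p + m p'`.  Modulo `2`
the matrix with rows `(q, p)` and `(q', p')` is invertible, so the parity conditions on `A, B`
select one parity class of `k`, the same one for every odd `m`.

Positivity of `A` and `B` means `m q' < k q` and `(k-1) p < m p'`.  Because
`a_n q' ≤ q ≤ (a_n+1) q'` and `a_n p' ≤ p ≤ (a_n+1) p'`, this leaves only `k = 1` as long as
`m ≤ a_n`, and only `k = 2` for the first odd `m > a_n`.  Hence membership is constant for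
`2ρ + 1 ≤ a_n` and changes at the next value of `ρ`, which is `⌊(a_n - 1)/2⌋ + 1`.
-/

/-- The numerical semigroup generated by `p` and `q`:
all integers of the form `t*p + u*q` with `t, u ≥ 0`. -/
def Spq (p q : ℤ) : Set ℤ := {n : ℤ | ∃ t u : ℤ, 0 ≤ t ∧ 0 ≤ u ∧ n = t * p + u * q}

/-- The set of integers `s ≥ 0` such that `δ, δ+1, …, δ+s` either all belong to `S(p,q)`
or none of them does, where `δ = (p-1)*(q-1)/2`.  `K(p,q)` is the greatest element
of this set. -/
def KSet (p q : ℤ) : Set ℤ :=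
  {s : ℤ | 0 ≤ s ∧ ∀ ρ : ℤ, 0 ≤ ρ → ρ ≤ s →
    ((p - 1) * (q - 1) / 2 + ρ ∈ Spq p q ↔ (p - 1) * (q - 1) / 2 ∈ Spq p q)}

/-- The value of the regular continued fraction `[a 0; a 1, …, a n]`. -/
def cfVal (a : ℕ → ℤ) : ℕ → ℚ
  | 0 => (a 0 : ℚ)
  | n + 1 => (a 0 : ℚ) + 1 / cfVal (fun i => a (i + 1)) n

lemma Spq_comm (p q : ℤ) : Spq p q = Spq q p := by
  ext x
  constructor <;> rintro ⟨t, u, ht, hu, rfl⟩ <;> exact ⟨u, t, hu, ht, by ring⟩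

/-- The integer `k` is in the parity class for which both `k q - m q'` and `(1-k) p + m p'` are odd
when `m` is odd. -/
def Adm (p q p' q' k : ℤ) : Prop := Odd (k * q - q') ∧ Odd ((1 - k) * p + p')

lemma adm_iff {p q p' q' : ℤ} (hdet : q * p' - p * q' = 1) :
    Adm p q p' q' 2 ↔ ¬ Adm p q p' q' 1 := by
  have h : Odd (q * p' - p * q') := by rw [hdet]; exact odd_one
  have h2 : (1 - 2 : ℤ) * p + p' = p' - p := by ring
  have h1 : (1 - 1 : ℤ) * p + p' = p' := by ring
  have h3 : (2 * q - q') = q + q - q' := by ring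
  unfold Adm
  rw [h2, h1, h3, one_mul]
  simp only [Int.odd_sub, Int.odd_add, Int.odd_mul, ← Int.not_odd_iff_even] at h ⊢
  tauto

/-- Membership of `δ + ρ` in the semigroup, through the parametrisation of the solutions of
`A p + B q = p q + m` with `m = 2ρ + 1`. -/
lemma mem_iff {p q p' q' δ ρ : ℤ} (hδ : 2 * δ = (p - 1) * (q - 1)) (hq : 0 < q)
    (hdet : q * p' - p * q' = 1) :
    δ + ρ ∈ Spq p q ↔ ∃ k, Adm p q p' q' k ∧ (2 * ρ + 1) * q' < k * q ∧
      (k - 1) * p < (2 * ρ + 1) * p' := by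
  constructor
  · rintro ⟨t, u, ht, hu, h⟩
    -- with `A = 2t+1`, the parameter is `k = (A + m q') / q`
    have hcop : IsCoprime q p := ⟨p', -q', by linarith⟩
    have hd : q ∣ p * (2 * t + 1 + (2 * ρ + 1) * q') :=
      ⟨p - (2 * u + 1) + (2 * ρ + 1) * p', by
        linear_combination (-2) * h + hδ - (2 * ρ + 1) * hdet⟩
    obtain ⟨k, hk⟩ := hcop.dvd_of_dvd_mul_left hd
    have hB : 2 * u + 1 = (1 - k) * p + (2 * ρ + 1) * p' := by
      apply mul_left_cancel₀ hq.ne'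
      linear_combination (-2) * h + hδ - (2 * ρ + 1) * hdet - p * hk
    refine ⟨k, ⟨⟨t + ρ * q', by linarith⟩, ⟨u - ρ * p', by linarith⟩⟩, by linarith, by linarith⟩
  · rintro ⟨k, ⟨⟨c, hc⟩, ⟨d, hd⟩⟩, h1, h2⟩
    refine ⟨c - ρ * q', d + ρ * p', ?_, ?_, ?_⟩
    · have : 0 < 2 * (c - ρ * q') + 1 := by linarith
      omega
    · have : 0 < 2 * (d + ρ * p') + 1 := by linarith
      omega
    · apply mul_left_cancel₀ (two_ne_zero (α := ℤ))
      linear_combination hδ + p * hc + q * hd - (2 * ρ + 1) * hdet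

/-- The theorem in terms of the neighbour `q'/p'` of `q/p`, for one sign of the determinant; the
other sign follows by exchanging `p` and `q`. -/
lemma core {p q p' q' N δ : ℤ} (hδ : 2 * δ = (p - 1) * (q - 1)) (hp : 1 < p) (hq : 1 < q)
    (hp' : 1 ≤ p') (hq' : 1 ≤ q') (hdet : q * p' - p * q' = 1) (hN : 2 ≤ N)
    (hp1 : N * p' ≤ p) (hp2 : p ≤ (N + 1) * p') (hq1 : N * q' ≤ q) (hq2 : q ≤ (N + 1) * q') :
    IsGreatest {w : ℤ | 1 ≤ w ∧ ((∀ ρ : ℤ, 0 ≤ ρ → ρ < w → δ + ρ ∈ Spq p q) ∨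
         (∀ ρ : ℤ, 0 ≤ ρ → ρ < w → δ + ρ ∉ Spq p q))} ((N - 1) / 2 + 1) := by
  have hsmall : ∀ ρ : ℤ, 0 ≤ ρ → 2 * ρ + 1 ≤ N →
      (δ + ρ ∈ Spq p q ↔ Adm p q p' q' 1) := by
    intro ρ h0 hm
    rw [mem_iff hδ (by omega) hdet]
    have e1 : (2 * ρ + 1) * q' ≤ N * q' := by gcongr
    have e2 : (2 * ρ + 1) * p' ≤ N * p' := by gcongr
    have e0 : 0 < (2 * ρ + 1) * q' := by positivity
    have e3 : 0 < (2 * ρ + 1) * p' := by positivity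
    constructor
    · rintro ⟨k, hk, h1, h2⟩
      have k1 : 0 < k := by
        by_contra! hh
        nlinarith
      have k2 : k < 2 := by
        by_contra! hh
        nlinarith
      obtain rfl : k = 1 := by omega
      exact hk
    · intro h
      refine ⟨1, h, ?_, by linarith⟩
      -- equality `N q' = q` would give `(N p' - p) q' = 1`, against `N p' ≤ p`
      rcases hq1.lt_or_eq with h | h
      · linarith
      · rw [← h] at hdet
        nlinarith [mul_nonneg (sub_nonneg.2 hp1) (by omega : 0 ≤ q')]
  have hbig : δ + ((N - 1) / 2 + 1) ∈ Spq p q ↔ Adm p q p' q' 2 := by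
    rw [mem_iff hδ (by omega) hdet]
    obtain ⟨m, hm⟩ : ∃ m, m = 2 * ((N - 1) / 2 + 1) + 1 := ⟨_, rfl⟩
    rw [← hm]
    have m1 : N + 1 ≤ m := by omega
    have m2 : m < 2 * N := by omega
    have e1 : (N + 1) * q' ≤ m * q' := by gcongr
    have e2 : (N + 1) * p' ≤ m * p' := by gcongr
    have e3 : m * q' < 2 * N * q' := by gcongr
    have e4 : m * p' < 2 * N * p' := by gcongr
    constructor
    · rintro ⟨k, hk, h1, h2⟩
      have k1 : 1 < k := by
        by_contra! hh
        nlinarith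
      have k2 : k < 3 := by
        by_contra! hh
        nlinarith
      obtain rfl : k = 2 := by omega
      exact hk
    · intro h
      refine ⟨2, h, by linarith, ?_⟩
      -- equality `m p' = p` would give `(q - m q') p' = 1`, against `q ≤ m q'`
      rcases (hp2.trans e2).lt_or_eq with h | h
      · linarith
      · rw [h] at hdet
        nlinarith [mul_nonneg (sub_nonneg.2 (hq2.trans e1)) (by omega : 0 ≤ p')]
  rw [adm_iff hdet] at hbig
  refine ⟨⟨by omega, ?_⟩, ?_⟩
  · by_cases h : Adm p q p' q' 1
    · exact Or.inl fun ρ h0 h1 => (hsmall ρ h0 (by omega)).2 h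
    · exact Or.inr fun ρ h0 h1 hc => h ((hsmall ρ h0 (by omega)).1 hc)
  · rintro w ⟨hw, h⟩
    by_contra! hlt
    have h00 := hsmall 0 le_rfl (by omega)
    rcases h with h | h
    · exact hbig.1 (h _ (by omega) hlt) (h00.1 (h 0 le_rfl (by omega)))
    · exact h _ (by omega) hlt (hbig.2 fun hc => h 0 le_rfl (by omega) (h00.2 hc))

lemma one_le_cfVal (n : ℕ) (a : ℕ → ℤ) (h : ∀ i ≤ n, 0 < a i) : 1 ≤ cfVal a n := by
  induction n generalizing a with
  | zero =>
    rw [cfVal]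
    exact_mod_cast h 0 le_rfl
  | succ n ih =>
    have h1 := ih (fun i => a (i + 1)) fun i hi => h (i + 1) (by omega)
    have h2 : (1 : ℚ) ≤ a 0 := by exact_mod_cast h 0 (by omega)
    have h3 : 0 ≤ 1 / cfVal (fun i => a (i + 1)) n := by positivity
    rw [cfVal]
    linarith

/-- The last convergent `q/p` of a continued fraction with positive entries, together with the
penultimate one `q'/p'`.  The bounds encode `q = N q' + q''` with `0 ≤ q'' ≤ q'`, where
`N = a (n + 1)` is the last entry, and similarly for `p`. -/
lemma exists_convergents (n : ℕ) (a : ℕ → ℤ) (h : ∀ i ≤ n + 1, 0 < a i) :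
    ∃ p q p' q' : ℤ, cfVal a (n + 1) = (q : ℚ) / p ∧ 0 < p ∧ 0 < q ∧ 1 ≤ p' ∧ 1 ≤ q' ∧
      (q * p' - p * q' = 1 ∨ p * q' - q * p' = 1) ∧
      a (n + 1) * p' ≤ p ∧ p ≤ (a (n + 1) + 1) * p' ∧
      a (n + 1) * q' ≤ q ∧ q ≤ (a (n + 1) + 1) * q' := by
  induction n generalizing a with
  | zero =>
    have h0 := h 0 (by omega)
    have h1 := h 1 (by omega)
    refine ⟨a 1, a 0 * a 1 + 1, 1, a 0, ?_, h1, by positivity, le_rfl, h0, Or.inl (by ring),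
      by simp, by simp, by simp only [zero_add]; linarith, by simp only [zero_add]; linarith⟩
    have : (a 1 : ℚ) ≠ 0 := by exact_mod_cast h1.ne'
    simp only [cfVal]
    push_cast
    field_simp
  | succ n ih =>
    obtain ⟨p, q, p', q', hv, hp, hq, hp', hq', hdet, b1, b2, b3, b4⟩ :=
      ih (fun i => a (i + 1)) fun i hi => h (i + 1) (by omega)
    have h0 := h 0 (by omega)
    refine ⟨q, a 0 * q + p, q', a 0 * q' + p', ?_, hq, by positivity, hq', by nlinarith, ?_,
      b3, b4, ?_, ?_⟩
    · have : (p : ℚ) ≠ 0 := by exact_mod_cast hp.ne'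
      have : (q : ℚ) ≠ 0 := by exact_mod_cast hq.ne'
      rw [cfVal, hv]
      push_cast
      field_simp
    · rcases hdet with hd | hd
      · right; linarith
      · left; linarith
    · nlinarith
    · nlinarith

theorem stmt1 (p q : ℤ) (hp : 1 < p) (hq : 1 < q) (hpq : Int.gcd p q = 1)
    (hqp : p < q)
    (n : ℕ) (a : ℕ → ℤ)
    (hcf : (q : ℚ) / (p : ℚ) = cfVal a n)
    (hpos : ∀ i : ℕ, 1 ≤ i → i ≤ n → 0 < a i)
    (hlast : 2 ≤ a n) :
    IsGreatest {w : ℤ | 1 ≤ w ∧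
        ((∀ ρ : ℤ, 0 ≤ ρ → ρ < w → (p - 1) * (q - 1) / 2 + ρ ∈ Spq p q) ∨
         (∀ ρ : ℤ, 0 ≤ ρ → ρ < w → (p - 1) * (q - 1) / 2 + ρ ∉ Spq p q))}
      ((a n - 1) / 2 + 1) := by
  obtain _ | n := n
  · -- `q / p = a 0` would make `p` divide `q`
    have hp0 : (p : ℚ) ≠ 0 := by exact_mod_cast (by omega : p ≠ 0)
    rw [cfVal, div_eq_iff hp0] at hcf
    have hd : q = a 0 * p := by exact_mod_cast hcf
    rw [hd, Int.gcd_mul_left_right] at hpq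
    omega
  have hp0 : (0 : ℚ) < p := by exact_mod_cast (by omega : 0 < p)
  have ha0 : 0 < a 0 := by
    -- the tail is at least `1`, so `1 < q / p ≤ a 0 + 1`
    have h1 := one_le_cfVal n (fun i => a (i + 1)) fun i hi => hpos (i + 1) (by omega) (by omega)
    have h2 : 1 / cfVal (fun i => a (i + 1)) n ≤ 1 := by
      rw [div_le_one (by linarith)]; exact h1
    have h3 : (1 : ℚ) < q / p := by
      rw [one_lt_div hp0]; exact_mod_cast hqp
    rw [hcf, cfVal] at h3
    have : (0 : ℚ) < a 0 := by linarith
    exact_mod_cast this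
  obtain ⟨P, Q, p', q', hv, hP, hQ, hp', hq', hdet, b1, b2, b3, b4⟩ :=
    exists_convergents n a fun i hi => by
      rcases Nat.eq_zero_or_pos i with rfl | h
      · exact ha0
      · exact hpos i h hi
  -- both `q / p` and `Q / P` are in lowest terms
  have hPQ : Int.gcd Q P = 1 := by
    rw [← Int.isCoprime_iff_gcd_eq_one]
    rcases hdet with hd | hd
    · exact ⟨p', -q', by linarith⟩
    · exact ⟨-p', q', by linarith⟩
  have heq : (q : ℚ) / p = Q / P := hcf.trans hv
  obtain ⟨rfl, rfl⟩ : q = Q ∧ p = P := by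
    rw [Int.gcd_comm] at hpq
    exact Rat.div_int_inj (by omega) hP hpq hPQ heq
  have hδ : 2 * ((p - 1) * (q - 1) / 2) = (p - 1) * (q - 1) := by
    apply Int.mul_ediv_cancel'
    rw [← even_iff_two_dvd]
    have h : Odd (q * p' - p * q') := by
      rcases hdet with hd | hd
      · rw [hd]; exact odd_one
      · rw [show q * p' - p * q' = -1 by linarith]; exact odd_neg_one
    simp only [Int.odd_sub, Int.odd_mul, ← Int.not_odd_iff_even] at h ⊢
    have : Odd (1 : ℤ) := odd_one
    tauto
  rcases hdet with hd | hd
  · exact core hδ hp hq hp' hq' hd hlast b1 b2 b3 b4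
  · rw [Spq_comm]
    exact core (by linarith) hq hp hq' hp' hd hlast b3 b4 b1 b2
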